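/- arXiv:2512.23524 — 4 statements merged into one kernel-verified Lean document; each statement's English description precedes it below -/
import Mathlib

section
/- Gradient gap bound via the PL error bound (step in the SharpDRO proof): For every θ ∈ ℝ^d and ω ∈ ℝ^m, ‖∇L*(θ) − ∇_θ L(θ, ω)‖ ≤ l · dist(ω, argmax_{ω'} L(θ, ω')) ≤ κ ‖∇_ω L(θ, ω)‖, where κ = l/μ and ∇L*(θ) = ∇_θ L(θ, ω*(θ)). -/
open MeasureTheory

/-- Partial gradient of `L` with respect to the first variable `θ`. -/
noncomputable def gradTheta {d n : ℕ}
    (L : EuclideanSpace ℝ (Fin d) → EuclideanSpace ℝ (Fin n) → ℝ)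
    (θ : EuclideanSpace ℝ (Fin d)) (ω : EuclideanSpace ℝ (Fin n)) :
    EuclideanSpace ℝ (Fin d) :=
  gradient (fun θ' => L θ' ω) θ

/-- Partial gradient of `L` with respect to the second variable `ω`. -/
noncomputable def gradOmega {d n : ℕ}
    (L : EuclideanSpace ℝ (Fin d) → EuclideanSpace ℝ (Fin n) → ℝ)
    (θ : EuclideanSpace ℝ (Fin d)) (ω : EuclideanSpace ℝ (Fin n)) :
    EuclideanSpace ℝ (Fin n) :=
  gradient (fun ω' => L θ ω') ω

/-!
For fixed `θ`, the PL inequality says that `ψ = √(L*(θ) - L(θ, ·))` has slope at least `√(μ/2)` off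
its zero set. Ekeland's variational principle turns this into
`√(μ/2) · dist(ω, argmax) ≤ ψ(ω)`, and applying PL once more at `ω` bounds `ψ(ω)` by the gradient.

At a maximizer `y` of `L(θ, ·)`, PL and the Lipschitz bound on `∇_ω L` give
`0 ≤ L*(θ') - L(θ', y) ≤ C ‖θ' - θ‖²`, so `L*` has at `θ` the same derivative as `L(·, y)`.
The gap is therefore `‖∇_θ L(θ, y) - ∇_θ L(θ, ω)‖ ≤ l ‖y - ω‖` for every maximizer `y`.
-/

section

open Filter
open scoped Topology NNReal

section Ekeland

theorem exists_mem_forall_two_mul_le_add {X : Type*} {g : X → ℝ} {s : Set X}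
    (hg : BddBelow (g '' s)) {x : X} (hx : x ∈ s) : ∃ y ∈ s, ∀ z ∈ s, 2 * g y ≤ g x + g z := by
  have inf_le : ∀ z ∈ s, sInf (g '' s) ≤ g z := fun z hz => csInf_le hg ⟨z, hz, rfl⟩
  rcases (inf_le x hx).eq_or_lt with h_min | h_lt
  · exact ⟨x, hx, fun z hz => by linarith [inf_le z hz]⟩
  · obtain ⟨_, ⟨y, hy, rfl⟩, hy_lt⟩ := exists_lt_of_csInf_lt (Set.Nonempty.image g ⟨x, hx⟩)
      (show sInf (g '' s) < (g x + sInf (g '' s)) / 2 by linarith)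
    exact ⟨y, hy, fun z hz => by linarith [inf_le z hz]⟩

theorem cauchySeq_of_mul_dist_le_sub {X : Type*} [PseudoMetricSpace X] {u : ℕ → X} {a : ℕ → ℝ}
    {c : ℝ} (hc : 0 < c) (ha : BddBelow (Set.range a))
    (hu : ∀ n m, n ≤ m → c * dist (u n) (u m) ≤ a n - a m) : CauchySeq u := by
  have ha_anti : Antitone a := fun n m hnm =>
    sub_nonneg.1 ((by positivity : 0 ≤ c * dist (u n) (u m)).trans (hu n m hnm))
  have ha_lim := tendsto_atTop_ciInf ha_anti ha
  refine cauchySeq_of_le_tendsto_0' (fun n => (a n - ⨅ k, a k) / c) (fun n m hnm => ?_) ?_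
  · rw [le_div_iff₀' hc]
    exact (hu n m hnm).trans (sub_le_sub_left (ciInf_le ha m) _)
  · simpa using (ha_lim.sub_const (⨅ k, a k)).div_const c

theorem ekeland_variational_principle {X : Type*} [MetricSpace X] [CompleteSpace X] {g : X → ℝ}
    (hg : LowerSemicontinuous g) (hg_bdd : BddBelow (Set.range g)) {c : ℝ} (hc : 0 < c) (w : X) :
    ∃ x, g x + c * dist w x ≤ g w ∧ ∀ y ≠ x, g x < g y + c * dist x y := by
  let S : X → Set X := fun x => {y | g y + c * dist x y ≤ g x}
  have self_mem : ∀ x, x ∈ S x := fun x => by simp [S]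
  have S_trans : ∀ {x y z}, y ∈ S x → z ∈ S y → z ∈ S x := fun {x y z} hy hz => by
    simp only [S, Set.mem_ofPred_eq] at hy hz ⊢
    linarith [mul_le_mul_of_nonneg_left (dist_triangle x y z) hc.le]
  have S_closed : ∀ x, IsClosed (S x) := fun x =>
    (hg.add (by fun_prop : Continuous fun y => c * dist x y).lowerSemicontinuous).isClosed_preimage
      (g x)
  -- `descend x` at least halves the excess of `g` over its infimum on `S x`.
  choose descend descend_mem descend_le using fun x =>
    exists_mem_forall_two_mul_le_add (hg_bdd.mono (Set.image_subset_range g (S x))) (self_mem x)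
  let u : ℕ → X := fun n => descend^[n] w
  have u_succ : ∀ n, u (n + 1) = descend (u n) := fun n => Function.iterate_succ_apply' descend n w
  have u_mem : ∀ n m, n ≤ m → u m ∈ S (u n) := fun n m hnm =>
    Nat.le_induction (self_mem _) (fun k _ hk => S_trans hk (u_succ k ▸ descend_mem (u k))) m hnm
  have gu_bdd : BddBelow (Set.range (g ∘ u)) := hg_bdd.mono (Set.range_comp_subset_range u g)
  have gu_anti : Antitone (g ∘ u) := fun n m hnm =>
    (le_add_of_nonneg_right (by positivity)).trans (u_mem n m hnm)
  obtain ⟨x, hx⟩ := cauchySeq_tendsto_of_complete <|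
    cauchySeq_of_mul_dist_le_sub hc gu_bdd fun n m hnm => le_sub_iff_add_le'.2 (u_mem n m hnm)
  have x_mem : ∀ n, x ∈ S (u n) := fun n =>
    (S_closed _).mem_of_tendsto hx <| (eventually_ge_atTop n).mono fun m hnm => u_mem n m hnm
  refine ⟨x, x_mem 0, fun y hyx => ?_⟩
  by_contra! hy
  have gu_lim := tendsto_atTop_ciInf gu_anti gu_bdd
  have le_inf : g x ≤ ⨅ n, (g ∘ u) n := le_ciInf fun n =>
    (le_add_of_nonneg_right (by positivity)).trans (x_mem n)
  have two_inf_le : 2 * ⨅ n, (g ∘ u) n ≤ (⨅ n, (g ∘ u) n) + g y :=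
    le_of_tendsto_of_tendsto' ((gu_lim.comp (tendsto_add_atTop_nat 1)).const_mul 2)
      (gu_lim.add_const (g y)) fun n => by
        simpa only [Function.comp_apply, u_succ] using descend_le (u n) y (S_trans (x_mem n) hy)
  have : 0 < c * dist x y := mul_pos hc (dist_pos.2 hyx.symm)
  linarith

end Ekeland

section PolyakLojasiewicz

variable {F : Type*} [NormedAddCommGroup F] [NormedSpace ℝ F]

theorem norm_le_of_hasFDerivAt_of_eventually_le_add {f : F → ℝ} {f' : F →L[ℝ] ℝ} {x : F} {c : ℝ}
    (hf : HasFDerivAt f f' x) (hc : 0 ≤ c) (hx : ∀ᶠ y in 𝓝 x, f x ≤ f y + c * dist x y) :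
    ‖f'‖ ≤ c := by
  refine le_of_forall_pos_le_add fun ε hε =>
    ContinuousLinearMap.opNorm_le_of_nhds_zero (by positivity) ?_
  have lower : ∀ᶠ v in 𝓝 (0 : F), -((c + ε) * ‖v‖) ≤ f' v := by
    have hx' : ∀ᶠ v in 𝓝 (0 : F), f x ≤ f (x + v) + c * dist x (x + v) :=
      (by simpa using (continuous_const_add x).tendsto 0 :
        Tendsto (x + ·) (𝓝 0) (𝓝 x)).eventually hx
    filter_upwards [hx', (hasFDerivAt_iff_isLittleO_nhds_zero.1 hf).def hε] with v hv h_rem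
    rw [dist_self_add_right] at hv
    linarith [(abs_le.1 h_rem).2]
  have lower_neg := (by simpa using (continuous_neg (G := F)).tendsto 0 :
    Tendsto (fun v : F => -v) (𝓝 0) (𝓝 0)).eventually lower
  filter_upwards [lower, lower_neg] with v hv hv_neg
  rw [map_neg, norm_neg] at hv_neg
  exact abs_le.2 ⟨hv, neg_le_neg_iff.1 hv_neg⟩

/-- The Polyak–Łojasiewicz inequality with constant `μ` for the maximization of `f`, whose supremum
is `M`. It is phrased with the Fréchet derivative so as to make sense in any normed space. -/
def PLCondition (f : F → ℝ) (M μ : ℝ) : Prop :=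
  ∀ x, 2 * μ * (M - f x) ≤ ‖fderiv ℝ f x‖ ^ 2

namespace PLCondition

variable {f : F → ℝ} {M μ : ℝ}

theorem eq_of_eventually_sqrt_le_add (hPL : PLCondition f M μ) {x : F} {c : ℝ}
    (hf : DifferentiableAt ℝ f x) (hM : f x ≤ M) (hc : 0 ≤ c) (hcμ : 2 * c ^ 2 < μ)
    (hx : ∀ᶠ y in 𝓝 x, √(M - f x) ≤ √(M - f y) + c * dist x y) : f x = M := by
  by_contra hne
  have gap_pos : 0 < M - f x := sub_pos.2 (hM.lt_of_ne hne)
  have slope_le := norm_le_of_hasFDerivAt_of_eventually_le_add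
    ((hf.hasFDerivAt.const_sub M).sqrt gap_pos.ne') hc hx
  rw [norm_smul, norm_neg, Real.norm_of_nonneg (by positivity), one_div_mul_eq_div,
    div_le_iff₀ (mul_pos two_pos (Real.sqrt_pos.2 gap_pos))] at slope_le
  have : 2 * μ * (M - f x) ≤ 2 * (2 * c ^ 2) * (M - f x) := calc
    2 * μ * (M - f x) ≤ ‖fderiv ℝ f x‖ ^ 2 := hPL x
    _ ≤ (c * (2 * √(M - f x))) ^ 2 := by gcongr
    _ = 2 * (2 * c ^ 2) * √(M - f x) ^ 2 := by ring
    _ = 2 * (2 * c ^ 2) * (M - f x) := by rw [Real.sq_sqrt gap_pos.le]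
  linarith [le_of_mul_le_mul_right this gap_pos]

theorem exists_eq_and_mul_dist_le_sqrt [CompleteSpace F] (hPL : PLCondition f M μ)
    (hf : Differentiable ℝ f) (hM : ∀ x, f x ≤ M) {c : ℝ} (hc : 0 < c) (hcμ : 2 * c ^ 2 < μ)
    (w : F) : ∃ x, f x = M ∧ c * dist w x ≤ √(M - f w) := by
  have sqrt_cont : Continuous fun x => √(M - f x) := by
    have := hf.continuous
    fun_prop
  obtain ⟨x, hx_le, hx_min⟩ := ekeland_variational_principle sqrt_cont.lowerSemicontinuous
    ⟨0, Set.forall_mem_range.2 fun _ => Real.sqrt_nonneg _⟩ hc w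
  refine ⟨x, hPL.eq_of_eventually_sqrt_le_add (hf x) (hM x) hc.le hcμ (.of_forall fun y => ?_),
    (le_add_of_nonneg_left (Real.sqrt_nonneg _)).trans hx_le⟩
  rcases eq_or_ne y x with rfl | hyx
  · simp
  · exact (hx_min y hyx).le

theorem nonempty_argmax [CompleteSpace F] (hPL : PLCondition f M μ) (hf : Differentiable ℝ f)
    (hM : ∀ x, f x ≤ M) (hμ : 0 < μ) : {x | ∀ y, f y ≤ f x}.Nonempty := by
  have hcμ : 2 * √(μ / 4) ^ 2 < μ := by
    rw [Real.sq_sqrt (by positivity)]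
    linarith
  obtain ⟨x, hx, -⟩ := hPL.exists_eq_and_mul_dist_le_sqrt hf hM (by positivity) hcμ 0
  exact ⟨x, fun y => hx ▸ hM y⟩

theorem sqrt_mul_infDist_argmax_le_sqrt [CompleteSpace F] (hPL : PLCondition f M μ)
    (hf : Differentiable ℝ f) (hM : ∀ x, f x ≤ M) (w : F) :
    √(μ / 2) * Metric.infDist w {x | ∀ y, f y ≤ f x} ≤ √(M - f w) := by
  set D := Metric.infDist w {x | ∀ y, f y ≤ f x}
  rcases (show 0 ≤ D from Metric.infDist_nonneg).eq_or_lt with hD | hD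
  · rw [← hD, mul_zero]
    exact Real.sqrt_nonneg _
  rw [← le_div_iff₀ hD]
  refine le_of_forall_lt_imp_le_of_dense fun c hc => ?_
  rcases le_or_gt c 0 with hc_nonpos | hc_pos
  · exact hc_nonpos.trans (by positivity)
  obtain ⟨x, hx, hx_dist⟩ := hPL.exists_eq_and_mul_dist_le_sqrt hf hM hc_pos
    (by linarith [(Real.lt_sqrt hc_pos.le).1 hc]) w
  rw [le_div_iff₀ hD]
  calc c * D ≤ c * dist w x := by
        gcongr
        exact Metric.infDist_le_dist_of_mem fun y => hx ▸ hM y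
    _ ≤ √(M - f w) := hx_dist

theorem mul_infDist_argmax_le_norm_fderiv [CompleteSpace F] (hPL : PLCondition f M μ)
    (hf : Differentiable ℝ f) (hM : ∀ x, f x ≤ M) (hμ : 0 ≤ μ) (w : F) :
    μ * Metric.infDist w {x | ∀ y, f y ≤ f x} ≤ ‖fderiv ℝ f w‖ := by
  have sq_sqrt_half : √(μ / 2) ^ 2 = μ / 2 := Real.sq_sqrt (by positivity)
  have sq_sqrt_gap : √(M - f w) ^ 2 = M - f w := Real.sq_sqrt (sub_nonneg.2 (hM w))
  calc μ * Metric.infDist w {x | ∀ y, f y ≤ f x}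
      = 2 * √(μ / 2) * (√(μ / 2) * Metric.infDist w {x | ∀ y, f y ≤ f x}) := by
        linear_combination (-2 * Metric.infDist w {x | ∀ y, f y ≤ f x}) * sq_sqrt_half
    _ ≤ 2 * √(μ / 2) * √(M - f w) := by
        gcongr
        exact hPL.sqrt_mul_infDist_argmax_le_sqrt hf hM w
    _ ≤ ‖fderiv ℝ f w‖ := by
        refine le_of_sq_le_sq ?_ (norm_nonneg _)
        rw [mul_pow, mul_pow, sq_sqrt_half, sq_sqrt_gap]
        linarith [hPL w]

end PLCondition

end PolyakLojasiewicz

section ValueFunction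

variable {E F : Type*} [NormedAddCommGroup E] [NormedAddCommGroup F] [NormedSpace ℝ F]
  {L : E → F → ℝ} {Lstar : E → ℝ} {μ : ℝ} {K : ℝ≥0} {θ : E} {y : F}

theorem sub_le_mul_sq_norm_sub_of_fderiv_eq_zero (hμ : 0 < μ)
    (hPL : ∀ θ', PLCondition (L θ') (Lstar θ') μ)
    (hLip : LipschitzWith K fun θ' => fderiv ℝ (L θ') y) (hy : fderiv ℝ (L θ) y = 0) (θ' : E) :
    Lstar θ' - L θ' y ≤ K ^ 2 / (2 * μ) * ‖θ' - θ‖ ^ 2 := by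
  have fderiv_le : ‖fderiv ℝ (L θ') y‖ ≤ K * ‖θ' - θ‖ := by
    simpa only [hy, sub_zero] using hLip.norm_sub_le θ' θ
  rw [div_mul_eq_mul_div, le_div_iff₀' (by positivity)]
  calc 2 * μ * (Lstar θ' - L θ' y) ≤ ‖fderiv ℝ (L θ') y‖ ^ 2 := hPL θ' y
    _ ≤ (K * ‖θ' - θ‖) ^ 2 := by gcongr
    _ = K ^ 2 * ‖θ' - θ‖ ^ 2 := mul_pow _ _ _

theorem hasFDerivAt_sup_of_plCondition [NormedSpace ℝ E] {L' : E →L[ℝ] ℝ} (hμ : 0 < μ)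
    (hle : ∀ θ', L θ' y ≤ Lstar θ') (hPL : ∀ θ', PLCondition (L θ') (Lstar θ') μ)
    (hLip : LipschitzWith K fun θ' => fderiv ℝ (L θ') y) (hy : fderiv ℝ (L θ) y = 0)
    (hL : HasFDerivAt (fun θ' => L θ' y) L' θ) : HasFDerivAt Lstar L' θ := by
  have gap_isBigO : (fun θ' => Lstar θ' - L θ' y) =O[𝓝 θ] fun θ' => ‖θ' - θ‖ ^ 2 :=
    .of_bound (K ^ 2 / (2 * μ)) <| .of_forall fun θ' => by
      rw [Real.norm_of_nonneg (sub_nonneg.2 (hle θ')), Real.norm_of_nonneg (by positivity)]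
      exact sub_le_mul_sq_norm_sub_of_fderiv_eq_zero hμ hPL hLip hy θ'
  simpa [Pi.add_def] using hL.add (gap_isBigO.hasFDerivAt one_lt_two)

end ValueFunction

theorem norm_sub_le_mul_infDist_of_lipschitzWith {X G : Type*} [PseudoMetricSpace X]
    [SeminormedAddCommGroup G] {K : ℝ≥0} {f : X → G} (hf : LipschitzWith K f) {s : Set X}
    (hs : s.Nonempty) {a : G} (ha : ∀ y ∈ s, f y = a) (x : X) :
    ‖a - f x‖ ≤ K * Metric.infDist x s := by
  have := hs.to_subtype
  rw [Metric.infDist_eq_iInf, Real.mul_iInf_of_nonneg K.coe_nonneg]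
  refine le_ciInf fun y => ?_
  rw [← ha y y.2, ← dist_eq_norm, dist_comm x]
  exact hf.dist_le_mul y x

theorem sharpDRO_gradient_gap_bound_general {E F : Type*} [NormedAddCommGroup E] [NormedSpace ℝ E]
    [NormedAddCommGroup F] [NormedSpace ℝ F] [CompleteSpace F] {L : E → F → ℝ} {Lstar : E → ℝ}
    {μ : ℝ} {K K' : ℝ≥0} (hμ : 0 < μ) (hLθ : ∀ ω, Differentiable ℝ fun θ => L θ ω)
    (hLω : ∀ θ, Differentiable ℝ (L θ))
    (hLipθ : ∀ θ, LipschitzWith K fun ω => fderiv ℝ (fun θ' => L θ' ω) θ)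
    (hLipω : ∀ ω, LipschitzWith K' fun θ => fderiv ℝ (L θ) ω)
    (hLstar : ∀ θ, IsLUB (Set.range (L θ)) (Lstar θ))
    (hPL : ∀ θ, PLCondition (L θ) (Lstar θ) μ) (θ : E) (ω : F) :
    ‖fderiv ℝ Lstar θ - fderiv ℝ (fun θ' => L θ' ω) θ‖
        ≤ K * Metric.infDist ω {ω' | ∀ ω'', L θ ω'' ≤ L θ ω'} ∧
      K * Metric.infDist ω {ω' | ∀ ω'', L θ ω'' ≤ L θ ω'} ≤ K / μ * ‖fderiv ℝ (L θ) ω‖ := by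
  have hle : ∀ θ ω, L θ ω ≤ Lstar θ := fun θ ω => (hLstar θ).1 ⟨ω, rfl⟩
  constructor
  · refine norm_sub_le_mul_infDist_of_lipschitzWith (hLipθ θ)
      ((hPL θ).nonempty_argmax (hLω θ) (hle θ) hμ) (fun y hy => ?_) ω
    have fderiv_eq_zero : fderiv ℝ (L θ) y = 0 := IsLocalMax.fderiv_eq_zero (.of_forall hy)
    exact (hasFDerivAt_sup_of_plCondition hμ (fun θ' => hle θ' y) hPL (hLipω y) fderiv_eq_zero
      (hLθ y θ).hasFDerivAt).fderiv.symm
  · rw [div_mul_eq_mul_div, mul_div_assoc]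
    gcongr
    rw [le_div_iff₀' hμ]
    exact (hPL θ).mul_infDist_argmax_le_norm_fderiv (hLω θ) (hle θ) hμ.le ω

end

/-- **Gradient gap bound via the PL error bound (step in the SharpDRO proof).**
For every `θ` and `ω`, `‖∇L*(θ) − ∇_θ L(θ, ω)‖ ≤ l · dist(ω, argmax L(θ, ·)) ≤ κ ‖∇_ω L(θ, ω)‖`
with `κ = l/μ`. -/
theorem sharpDRO_gradient_gap_bound {d n : ℕ}
    (L : EuclideanSpace ℝ (Fin d) → EuclideanSpace ℝ (Fin n) → ℝ)
    (l μpl : ℝ) (hl : 0 < l) (hμpl : 0 < μpl)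
    (hdiff : Differentiable ℝ (Function.uncurry L))
    (hLip : ∀ θ₁ ω₁ θ₂ ω₂,
      ‖gradTheta L θ₁ ω₁ - gradTheta L θ₂ ω₂‖ ≤ l * Real.sqrt (‖θ₁ - θ₂‖ ^ 2 + ‖ω₁ - ω₂‖ ^ 2) ∧
      ‖gradOmega L θ₁ ω₁ - gradOmega L θ₂ ω₂‖ ≤ l * Real.sqrt (‖θ₁ - θ₂‖ ^ 2 + ‖ω₁ - ω₂‖ ^ 2))
    (Lstar : EuclideanSpace ℝ (Fin d) → ℝ)
    (hLstar : ∀ θ, IsGreatest (Set.range (L θ)) (Lstar θ))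
    (hPL : ∀ θ ω, 2 * μpl * (Lstar θ - L θ ω) ≤ ‖gradOmega L θ ω‖ ^ 2) :
    ∀ θ ω,
      ‖gradient Lstar θ - gradTheta L θ ω‖
          ≤ l * Metric.infDist ω {ω' | ∀ ω'', L θ ω'' ≤ L θ ω'} ∧
      l * Metric.infDist ω {ω' | ∀ ω'', L θ ω'' ≤ L θ ω'} ≤ l / μpl * ‖gradOmega L θ ω‖ := by
  lift l to NNReal using hl.le
  simp only [gradTheta, gradOmega, gradient, ← map_sub, LinearIsometryEquiv.norm_map] at hLip hPL ⊢
  exact sharpDRO_gradient_gap_bound_general hμpl (fun ω => hdiff.comp (f := (·, ω)) (by fun_prop))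
    (fun θ => hdiff.comp (f := (θ, ·)) (by fun_prop))
    (fun θ => .of_dist_le_mul fun ω₁ ω₂ => by simpa [dist_eq_norm] using (hLip θ ω₁ θ ω₂).1)
    (fun ω => .of_dist_le_mul fun θ₁ θ₂ => by simpa [dist_eq_norm] using (hLip θ₁ ω θ₂ ω).2)
    (fun θ => (hLstar θ).isLUB) hPL
end

section
/- Cross-term bound for the SAM perturbed stochastic gradient (step in the SharpDRO proof): For every t, E⟨g'_t, ∇_θ L(θ_t, ω_t)⟩ ≤ (ρ l + 3/2) E‖∇_θ L(θ_t, ω_t)‖² + ρ² l² σ² / (2M). -/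
open MeasureTheory

open ProbabilityTheory

/-!
Since `∇_θ L(θ, ω)` is measurable before the second oracle call, conditioning replaces `g'` by its
mean `∇_θ L(θ + ρ g, ω)`. By the Lipschitz property this differs from `G := ∇_θ L(θ, ω)` by at most
`ρ l ‖g‖ ≤ ρ l (‖g - G‖ + ‖G‖)`, and Young's inequality splits the product `ρ l ‖g - G‖ ‖G‖` into
`ρ² l² ‖g - G‖² / 2 + ‖G‖² / 2`. The mean of `‖g - G‖²` is at most the variance bound.
-/

open scoped NNReal

section JointLipschitz

variable {E W E' : Type*} [SeminormedAddCommGroup E] [SeminormedAddCommGroup W]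
  [SeminormedAddCommGroup E'] {f : E → W → E'} {K : ℝ≥0}

theorem lipschitzWith_left_of_norm_sub_le_sqrt
    (hf : ∀ x₁ w₁ x₂ w₂, ‖f x₁ w₁ - f x₂ w₂‖ ≤ K * √(‖x₁ - x₂‖ ^ 2 + ‖w₁ - w₂‖ ^ 2)) (w : W) :
    LipschitzWith K fun x ↦ f x w :=
  .of_dist_le_mul fun x y ↦ by simpa [dist_eq_norm] using hf x w y w

theorem continuous_uncurry_of_norm_sub_le_sqrt
    (hf : ∀ x₁ w₁ x₂ w₂, ‖f x₁ w₁ - f x₂ w₂‖ ≤ K * √(‖x₁ - x₂‖ ^ 2 + ‖w₁ - w₂‖ ^ 2)) :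
    Continuous (Function.uncurry f) := by
  have hlip : LipschitzWith K fun p : WithLp 2 (E × W) ↦ f p.fst p.snd :=
    .of_dist_le_mul fun p q ↦ by
      rw [dist_eq_norm, WithLp.prod_dist_eq_of_L2, dist_eq_norm, dist_eq_norm]
      exact hf p.fst p.snd q.fst q.snd
  exact hlip.continuous.comp (WithLp.prod_continuous_toLp 2 E W)

end JointLipschitz

theorem inner_apply_add_smul_le_of_lipschitzWith {E : Type*} [NormedAddCommGroup E]
    [InnerProductSpace ℝ E] {V : E → E} {K : ℝ≥0} (hV : LipschitzWith K V) {ρ : ℝ} (hρ : 0 ≤ ρ)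
    (x v : E) :
    inner ℝ (V (x + ρ • v)) (V x) ≤
      (ρ * K + 3 / 2) * ‖V x‖ ^ 2 + ρ ^ 2 * K ^ 2 / 2 * ‖v - V x‖ ^ 2 := by
  have hdiff : ‖V (x + ρ • v) - V x‖ ≤ ρ * K * (‖v - V x‖ + ‖V x‖) := calc
    ‖V (x + ρ • v) - V x‖ ≤ K * ‖x + ρ • v - x‖ := hV.norm_sub_le _ _
    _ = ρ * K * ‖v‖ := by
      rw [add_sub_cancel_left, norm_smul, Real.norm_of_nonneg hρ]; ring
    _ ≤ ρ * K * (‖v - V x‖ + ‖V x‖) := by gcongr; exact norm_le_norm_sub_add v (V x)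
  calc inner ℝ (V (x + ρ • v)) (V x)
      = inner ℝ (V (x + ρ • v) - V x) (V x) + ‖V x‖ ^ 2 := by
        rw [inner_sub_left, real_inner_self_eq_norm_sq, sub_add_cancel]
    _ ≤ ‖V (x + ρ • v) - V x‖ * ‖V x‖ + ‖V x‖ ^ 2 := by
        gcongr; exact real_inner_le_norm _ _
    _ ≤ ρ * K * (‖v - V x‖ + ‖V x‖) * ‖V x‖ + ‖V x‖ ^ 2 := by gcongr
    _ = ρ * K * ‖v - V x‖ * ‖V x‖ + (ρ * K + 1) * ‖V x‖ ^ 2 := by ring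
    _ ≤ (ρ * K + 3 / 2) * ‖V x‖ ^ 2 + ρ ^ 2 * K ^ 2 / 2 * ‖v - V x‖ ^ 2 := by
        linarith [two_mul_le_add_sq (ρ * K * ‖v - V x‖) ‖V x‖]

section ConditionalExpectation

variable {Ω : Type*} {m mΩ : MeasurableSpace Ω} {μ : Measure Ω}

theorem integral_bilin_condExp_left {E F G : Type*} [NormedAddCommGroup E] [NormedSpace ℝ E]
    [CompleteSpace E] [NormedAddCommGroup F] [NormedSpace ℝ F] [NormedAddCommGroup G]
    [NormedSpace ℝ G] [CompleteSpace G] (hm : m ≤ mΩ) [SigmaFinite (μ.trim hm)]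
    (B : E →L[ℝ] F →L[ℝ] G) {X : Ω → E} {Y : Ω → F} (hY : AEStronglyMeasurable[m] Y μ)
    (hXY : Integrable (fun x ↦ B (X x) (Y x)) μ) (hX : Integrable X μ) :
    ∫ x, B (μ[X | m] x) (Y x) ∂μ = ∫ x, B (X x) (Y x) ∂μ := by
  rw [← integral_condExp hm (f := fun x ↦ B (X x) (Y x))]
  exact integral_congr_ae (condExp_bilin_of_aestronglyMeasurable_right B hY hXY hX).symm

theorem integral_le_of_condExp_le [IsProbabilityMeasure μ] (hm : m ≤ mΩ) {X : Ω → ℝ} {c : ℝ}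
    (hX : ∀ᵐ x ∂μ, μ[X | m] x ≤ c) : ∫ x, X x ∂μ ≤ c := by
  rw [← integral_condExp hm]
  simpa using integral_mono_ae integrable_condExp (integrable_const c) hX

end ConditionalExpectation

/-- `V` stands for the gradient field `∇_θ L` and `m` for the information available when the second
oracle `g'` is called, that is `F_t ⊔ σ(g_t)`. -/
theorem sharpDRO_cross_term_bound_general {E W Ω : Type*} [NormedAddCommGroup E]
    [InnerProductSpace ℝ E] [CompleteSpace E] [SecondCountableTopology E] [MeasurableSpace E]
    [BorelSpace E] [MeasurableSpace W] {m mΩ : MeasurableSpace Ω} {P : Measure Ω}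
    [IsFiniteMeasure P] {V : E → W → E} {K : ℝ≥0} {ρ v : ℝ} (hρ : 0 ≤ ρ)
    (hVlip : ∀ w, LipschitzWith K fun x ↦ V x w) (hVmeas : Measurable (Function.uncurry V))
    (hm : m ≤ mΩ) {θ : Ω → E} {ω : Ω → W} {g g' : Ω → E}
    (hθ : Measurable[m] θ) (hω : Measurable[m] ω)
    (hg_err : ∫ x, ‖g x - V (θ x) (ω x)‖ ^ 2 ∂P ≤ v)
    (hg'_mean : P[g' | m] =ᵐ[P] fun x ↦ V (θ x + ρ • g x) (ω x))
    (hg : MemLp g 2 P) (hg' : MemLp g' 2 P) (hV_sq : Integrable (fun x ↦ ‖V (θ x) (ω x)‖ ^ 2) P) :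
    ∫ x, inner ℝ (g' x) (V (θ x) (ω x)) ∂P ≤
      (ρ * K + 3 / 2) * ∫ x, ‖V (θ x) (ω x)‖ ^ 2 ∂P + ρ ^ 2 * K ^ 2 / 2 * v := by
  set G : Ω → E := fun x ↦ V (θ x) (ω x)
  have hGm : StronglyMeasurable[m] G := (hVmeas.comp (hθ.prodMk hω)).stronglyMeasurable
  have hG : MemLp G 2 P :=
    (memLp_two_iff_integrable_sq_norm (hGm.mono hm).aestronglyMeasurable).2 hV_sq
  have hinner {X : Ω → E} (hX : MemLp X 2 P) : Integrable (fun x ↦ inner ℝ (X x) (G x)) P :=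
    memLp_one_iff_integrable.1 ((innerSL ℝ).memLp_of_bilin 1 hX hG)
  have hG_sq : Integrable (fun x ↦ (ρ * K + 3 / 2) * ‖G x‖ ^ 2) P := hV_sq.const_mul _
  have herr_sq : Integrable (fun x ↦ ρ ^ 2 * K ^ 2 / 2 * ‖g x - G x‖ ^ 2) P :=
    ((hg.sub hG).integrable_norm_pow two_ne_zero).const_mul _
  calc ∫ x, inner ℝ (g' x) (G x) ∂P
      = ∫ x, inner ℝ (P[g' | m] x) (G x) ∂P :=
        (integral_bilin_condExp_left hm (innerSL ℝ) hGm.aestronglyMeasurable (hinner hg')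
          (hg'.integrable one_le_two)).symm
    _ ≤ ∫ x, ((ρ * K + 3 / 2) * ‖G x‖ ^ 2 + ρ ^ 2 * K ^ 2 / 2 * ‖g x - G x‖ ^ 2) ∂P := by
        refine integral_mono_ae (hinner (hg'.condExp one_le_two)) (hG_sq.add herr_sq) ?_
        filter_upwards [hg'_mean] with x hx
        rw [hx]
        exact inner_apply_add_smul_le_of_lipschitzWith (hVlip (ω x)) hρ (θ x) (g x)
    _ = (ρ * K + 3 / 2) * ∫ x, ‖G x‖ ^ 2 ∂P +
          ρ ^ 2 * K ^ 2 / 2 * ∫ x, ‖g x - G x‖ ^ 2 ∂P := by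
        rw [integral_add hG_sq herr_sq, integral_const_mul, integral_const_mul]
    _ ≤ (ρ * K + 3 / 2) * ∫ x, ‖G x‖ ^ 2 ∂P + ρ ^ 2 * K ^ 2 / 2 * v := by gcongr

theorem sharpDRO_cross_term_bound {d n : ℕ} {Ω : Type} [mΩ : MeasurableSpace Ω]
    (P : Measure Ω) [IsProbabilityMeasure P]
    (L : EuclideanSpace ℝ (Fin d) → EuclideanSpace ℝ (Fin n) → ℝ)
    (l μpl σ ρ : ℝ) (M : ℕ)
    (hl : 0 < l) (hμpl : 0 < μpl) (hσ : 0 < σ) (hρ : 0 < ρ) (hM : 1 ≤ M)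
    (hdiff : Differentiable ℝ (Function.uncurry L))
    (hLip : ∀ θ₁ ω₁ θ₂ ω₂,
      ‖gradTheta L θ₁ ω₁ - gradTheta L θ₂ ω₂‖ ≤ l * Real.sqrt (‖θ₁ - θ₂‖ ^ 2 + ‖ω₁ - ω₂‖ ^ 2) ∧
      ‖gradOmega L θ₁ ω₁ - gradOmega L θ₂ ω₂‖ ≤ l * Real.sqrt (‖θ₁ - θ₂‖ ^ 2 + ‖ω₁ - ω₂‖ ^ 2))
    (Lstar : EuclideanSpace ℝ (Fin d) → ℝ)
    (hLstar : ∀ θ', IsGreatest (Set.range (L θ')) (Lstar θ'))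
    (hPL : ∀ θ' ω', 2 * μpl * (Lstar θ' - L θ' ω') ≤ ‖gradOmega L θ' ω'‖ ^ 2)
    (F : ℕ → MeasurableSpace Ω) (hF : ∀ t, F t ≤ mΩ)
    (θ : ℕ → Ω → EuclideanSpace ℝ (Fin d)) (ω : ℕ → Ω → EuclideanSpace ℝ (Fin n))
    (g g' : ℕ → Ω → EuclideanSpace ℝ (Fin d))
    (hθmeas : ∀ t, Measurable[F t] (θ t)) (hωmeas : ∀ t, Measurable[F t] (ω t))
    (hgmeas : ∀ t, Measurable (g t)) (hg'meas : ∀ t, Measurable (g' t))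
    (hg_mean : ∀ t, P[g t|F t] =ᵐ[P] fun x => gradTheta L (θ t x) (ω t x))
    (hg_var : ∀ t, ∀ᵐ x ∂P,
      (P[(fun y => ‖g t y - gradTheta L (θ t y) (ω t y)‖ ^ 2)|F t]) x ≤ σ ^ 2 / (M : ℝ))
    (hg'_mean : ∀ t, P[g' t|F t ⊔ MeasurableSpace.comap (g t) inferInstance] =ᵐ[P]
      fun x => gradTheta L (θ t x + ρ • g t x) (ω t x))
    (hg'_var : ∀ t, ∀ᵐ x ∂P,
      (P[(fun y => ‖g' t y - gradTheta L (θ t y + ρ • g t y) (ω t y)‖ ^ 2)|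
        F t ⊔ MeasurableSpace.comap (g t) inferInstance]) x ≤ σ ^ 2 / (M : ℝ))
    (hint_g2 : ∀ t, Integrable (fun x => ‖g t x‖ ^ 2) P)
    (hint_g'2 : ∀ t, Integrable (fun x => ‖g' t x‖ ^ 2) P)
    (hint_gradθ2 : ∀ t, Integrable (fun x => ‖gradTheta L (θ t x) (ω t x)‖ ^ 2) P)
    (hint_inner : ∀ t,
      Integrable (fun x => (inner ℝ (g' t x) (gradTheta L (θ t x) (ω t x)) : ℝ)) P)
    :
    ∀ t, ∫ x, (inner ℝ (g' t x) (gradTheta L (θ t x) (ω t x)) : ℝ) ∂P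
      ≤ (ρ * l + 3 / 2) * ∫ x, ‖gradTheta L (θ t x) (ω t x)‖ ^ 2 ∂P
        + ρ ^ 2 * l ^ 2 * σ ^ 2 / (2 * M) := by
  intro t
  have hLip_θ := fun θ₁ ω₁ θ₂ ω₂ ↦ (hLip θ₁ ω₁ θ₂ ω₂).1
  lift l to ℝ≥0 using hl.le
  simpa only [div_mul_div_comm] using sharpDRO_cross_term_bound_general hρ.le
    (lipschitzWith_left_of_norm_sub_le_sqrt hLip_θ)
    (continuous_uncurry_of_norm_sub_le_sqrt hLip_θ).measurable
    (sup_le (hF t) (hgmeas t).comap_le)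
    ((hθmeas t).mono le_sup_left le_rfl) ((hωmeas t).mono le_sup_left le_rfl)
    (integral_le_of_condExp_le (hF t) (hg_var t)) (hg'_mean t)
    ((memLp_two_iff_integrable_sq_norm (hgmeas t).aestronglyMeasurable).2 (hint_g2 t))
    ((memLp_two_iff_integrable_sq_norm (hg'meas t).aestronglyMeasurable).2 (hint_g'2 t))
    (hint_gradθ2 t)
end

section
/- Second-moment bound for the SAM perturbed stochastic gradient (Lemma in the SharpDRO proof): For every t, E‖g'_t‖² ≤ (4ρ²l² + 2ρl + 2) E‖∇_θ L(θ_t, ω_t)‖² + (5ρ²l² + 2) σ²/M. -/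
open MeasureTheory

open ProbabilityTheory

/-!
Write `G = ∇_θ L(θ_t, ω_t)` and `H = ∇_θ L(θ_{t+1/2}, ω_t)`. Since `g'` has conditional mean `H`,
its second moment splits as `E‖g'‖² = E‖g' - H‖² + E‖H‖²`. The first term is the noise level, and
the Lipschitz estimate `‖H - G‖ ≤ lρ‖g‖ ≤ lρ(‖g - G‖ + ‖G‖)` bounds the second by
`(4ρ²l² + 2) E‖G‖² + 4ρ²l² E‖g - G‖²`.
-/

section

open scoped NNReal RealInnerProductSpace

lemma lipschitzWith_left_of_norm_sub_le_sqrt_s8 {A B C : Type*} [SeminormedAddCommGroup A]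
    [SeminormedAddCommGroup B] [SeminormedAddCommGroup C] {f : A → B → C} {K : ℝ≥0}
    (hf : ∀ a₁ b₁ a₂ b₂, ‖f a₁ b₁ - f a₂ b₂‖ ≤ K * √(‖a₁ - a₂‖ ^ 2 + ‖b₁ - b₂‖ ^ 2)) (b : B) :
    LipschitzWith K fun a => f a b :=
  LipschitzWith.of_dist_le_mul fun a₁ a₂ => by
    simpa [dist_eq_norm] using hf a₁ b a₂ b

lemma norm_add_sq_le_two_mul {A : Type*} [SeminormedAddCommGroup A] (a b : A) :
    ‖a + b‖ ^ 2 ≤ 2 * (‖a‖ ^ 2 + ‖b‖ ^ 2) :=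
  (pow_le_pow_left₀ (norm_nonneg _) (norm_add_le a b) 2).trans add_sq_le

lemma norm_sq_apply_add_smul_le {A : Type*} [SeminormedAddCommGroup A] [NormedSpace ℝ A]
    {f : A → A} {K : ℝ≥0} (hf : LipschitzWith K f) (ρ : ℝ) (a v : A) :
    ‖f (a + ρ • v)‖ ^ 2 ≤
      (4 * ρ ^ 2 * K ^ 2 + 2) * ‖f a‖ ^ 2 + 4 * ρ ^ 2 * K ^ 2 * ‖v - f a‖ ^ 2 := by
  have increment : ‖f (a + ρ • v) - f a‖ ^ 2 ≤ ρ ^ 2 * K ^ 2 * ‖v‖ ^ 2 := by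
    calc ‖f (a + ρ • v) - f a‖ ^ 2 ≤ (K * ‖a + ρ • v - a‖) ^ 2 := by
          gcongr; exact hf.norm_sub_le _ _
      _ = ρ ^ 2 * K ^ 2 * ‖v‖ ^ 2 := by
          rw [add_sub_cancel_left, norm_smul, mul_pow, mul_pow, Real.norm_eq_abs, sq_abs]; ring
  have direction : ‖v‖ ^ 2 ≤ 2 * (‖v - f a‖ ^ 2 + ‖f a‖ ^ 2) := by
    simpa only [sub_add_cancel] using norm_add_sq_le_two_mul (v - f a) (f a)
  calc ‖f (a + ρ • v)‖ ^ 2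
      ≤ 2 * (‖f (a + ρ • v) - f a‖ ^ 2 + ‖f a‖ ^ 2) := by
        simpa only [sub_add_cancel] using norm_add_sq_le_two_mul (f (a + ρ • v) - f a) (f a)
    _ ≤ 2 * (ρ ^ 2 * K ^ 2 * (2 * (‖v - f a‖ ^ 2 + ‖f a‖ ^ 2)) + ‖f a‖ ^ 2) := by
        grw [increment, direction]
    _ = (4 * ρ ^ 2 * K ^ 2 + 2) * ‖f a‖ ^ 2 + 4 * ρ ^ 2 * K ^ 2 * ‖v - f a‖ ^ 2 := by ring

variable {Ω E : Type*} {m mΩ : MeasurableSpace Ω} {P : Measure Ω}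
  [NormedAddCommGroup E] [InnerProductSpace ℝ E]

lemma integral_le_of_ae_condExp_le [IsProbabilityMeasure P] (hm : m ≤ mΩ) {f : Ω → ℝ} {c : ℝ}
    (hf : ∀ᵐ x ∂P, P[f | m] x ≤ c) : ∫ x, f x ∂P ≤ c := by
  calc ∫ x, f x ∂P = ∫ x, P[f | m] x ∂P := (integral_condExp hm).symm
    _ ≤ ∫ _, c ∂P := integral_mono_ae integrable_condExp (integrable_const c) hf
    _ = c := by simp

lemma integrable_inner_of_memLp_two {X Y : Ω → E} (hX : MemLp X 2 P) (hY : MemLp Y 2 P) :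
    Integrable (fun x => ⟪X x, Y x⟫) P :=
  (hX.norm.integrable_mul hY.norm).mono (hX.1.inner hY.1) <| .of_forall fun x => by
    simpa using abs_real_inner_le_norm (X x) (Y x)

lemma integral_norm_sub_sq_of_memLp_two {X Y : Ω → E} (hX : MemLp X 2 P) (hY : MemLp Y 2 P) :
    ∫ x, ‖X x - Y x‖ ^ 2 ∂P =
      ∫ x, ‖X x‖ ^ 2 ∂P - 2 * ∫ x, ⟪X x, Y x⟫ ∂P + ∫ x, ‖Y x‖ ^ 2 ∂P := by
  have hX2 := hX.integrable_norm_pow two_ne_zero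
  have hXY := (integrable_inner_of_memLp_two hX hY).const_mul 2
  have hdiff : Integrable (fun x => ‖X x‖ ^ 2 - 2 * ⟪X x, Y x⟫) P := hX2.sub hXY
  simp only [norm_sub_sq_real]
  rw [integral_add hdiff (hY.integrable_norm_pow two_ne_zero), integral_sub hX2 hXY,
    integral_const_mul]

lemma integral_inner_condExp_right [CompleteSpace E] (hm : m ≤ mΩ) [SigmaFinite (P.trim hm)]
    {X Y : Ω → E} (hY : AEStronglyMeasurable[m] Y P) (hX : Integrable X P)
    (hYX : Integrable (fun x => ⟪Y x, X x⟫) P) :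
    ∫ x, ⟪Y x, P[X | m] x⟫ ∂P = ∫ x, ⟪Y x, X x⟫ ∂P := by
  have pull_out : P[fun x => ⟪Y x, X x⟫ | m] =ᵐ[P] fun x => ⟪Y x, P[X | m] x⟫ :=
    condExp_bilin_of_aestronglyMeasurable_left (innerSL ℝ) hY hYX hX
  rw [← integral_condExp hm (f := fun x => ⟪Y x, X x⟫)]
  exact integral_congr_ae pull_out.symm

lemma integral_norm_sq_eq_add_of_condExp_ae_eq [CompleteSpace E] [IsFiniteMeasure P]
    (hm : m ≤ mΩ) {X Y : Ω → E} (hX : MemLp X 2 P) (hXY : P[X | m] =ᵐ[P] Y) :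
    ∫ x, ‖X x‖ ^ 2 ∂P = ∫ x, ‖X x - Y x‖ ^ 2 ∂P + ∫ x, ‖Y x‖ ^ 2 ∂P := by
  have hY : MemLp Y 2 P := (hX.condExp one_le_two).ae_eq hXY
  have hYX := integrable_inner_of_memLp_two hY hX
  have hYm : AEStronglyMeasurable[m] Y P :=
    stronglyMeasurable_condExp.aestronglyMeasurable.congr hXY
  have cross : ∫ x, ⟪Y x, X x⟫ ∂P = ∫ x, ‖Y x‖ ^ 2 ∂P := by
    rw [← integral_inner_condExp_right hm hYm (hX.integrable one_le_two) hYX]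
    refine integral_congr_ae (hXY.mono fun x hx => ?_)
    simp only [hx, real_inner_self_eq_norm_sq]
  have expand := integral_norm_sub_sq_of_memLp_two hX hY
  simp only [real_inner_comm (Y _)] at expand cross
  linarith

lemma integral_norm_sq_apply_add_smul_le {A : Type*} [NormedAddCommGroup A] [NormedSpace ℝ A]
    {V : Ω → A → A} {K : ℝ≥0} (hV : ∀ x, LipschitzWith K (V x)) (ρ : ℝ) {θ g : Ω → A}
    (hg : MemLp g 2 P) (hVθ : MemLp (fun x => V x (θ x)) 2 P) :
    ∫ x, ‖V x (θ x + ρ • g x)‖ ^ 2 ∂P ≤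
      (4 * ρ ^ 2 * K ^ 2 + 2) * ∫ x, ‖V x (θ x)‖ ^ 2 ∂P +
        4 * ρ ^ 2 * K ^ 2 * ∫ x, ‖g x - V x (θ x)‖ ^ 2 ∂P := by
  have field_sq : Integrable (fun x => (4 * ρ ^ 2 * K ^ 2 + 2) * ‖V x (θ x)‖ ^ 2) P :=
    (hVθ.integrable_norm_pow two_ne_zero).const_mul _
  have noise_sq : Integrable (fun x => 4 * ρ ^ 2 * K ^ 2 * ‖g x - V x (θ x)‖ ^ 2) P :=
    ((hg.sub hVθ).integrable_norm_pow two_ne_zero).const_mul _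
  rw [← integral_const_mul, ← integral_const_mul, ← integral_add field_sq noise_sq]
  exact integral_mono_of_nonneg (.of_forall fun x => sq_nonneg _) (field_sq.add noise_sq)
    (.of_forall fun x => norm_sq_apply_add_smul_le (hV x) ρ (θ x) (g x))

/-- The random field `V x` stands for `∇_θ L(·, ω_t)` at the outcome `x`. -/
theorem sharpDRO_second_moment_bound_general [CompleteSpace E] [IsFiniteMeasure P]
    (hm : m ≤ mΩ) {V : Ω → E → E} {K : ℝ≥0} (hV : ∀ x, LipschitzWith K (V x)) (ρ : ℝ)
    {θ g g' : Ω → E} {s s' : ℝ} (hg : MemLp g 2 P) (hg' : MemLp g' 2 P)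
    (hVθ : MemLp (fun x => V x (θ x)) 2 P)
    (hg_var : ∫ x, ‖g x - V x (θ x)‖ ^ 2 ∂P ≤ s)
    (hg'_mean : P[g' | m] =ᵐ[P] fun x => V x (θ x + ρ • g x))
    (hg'_var : ∫ x, ‖g' x - V x (θ x + ρ • g x)‖ ^ 2 ∂P ≤ s') :
    ∫ x, ‖g' x‖ ^ 2 ∂P ≤
      (4 * ρ ^ 2 * K ^ 2 + 2) * ∫ x, ‖V x (θ x)‖ ^ 2 ∂P + 4 * ρ ^ 2 * K ^ 2 * s + s' := by
  calc ∫ x, ‖g' x‖ ^ 2 ∂P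
      = ∫ x, ‖g' x - V x (θ x + ρ • g x)‖ ^ 2 ∂P + ∫ x, ‖V x (θ x + ρ • g x)‖ ^ 2 ∂P :=
        integral_norm_sq_eq_add_of_condExp_ae_eq hm hg' hg'_mean
    _ ≤ s' + ((4 * ρ ^ 2 * K ^ 2 + 2) * ∫ x, ‖V x (θ x)‖ ^ 2 ∂P + 4 * ρ ^ 2 * K ^ 2 * s) := by
        grw [hg'_var, integral_norm_sq_apply_add_smul_le hV ρ hg hVθ, hg_var]
    _ = (4 * ρ ^ 2 * K ^ 2 + 2) * ∫ x, ‖V x (θ x)‖ ^ 2 ∂P + 4 * ρ ^ 2 * K ^ 2 * s + s' := by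
        ring

end

theorem sharpDRO_second_moment_bound {d n : ℕ} {Ω : Type} [mΩ : MeasurableSpace Ω]
    (P : Measure Ω) [IsProbabilityMeasure P]
    (L : EuclideanSpace ℝ (Fin d) → EuclideanSpace ℝ (Fin n) → ℝ)
    (l μpl σ ρ : ℝ) (M : ℕ)
    (hl : 0 < l) (hμpl : 0 < μpl) (hσ : 0 < σ) (hρ : 0 < ρ) (hM : 1 ≤ M)
    (hdiff : Differentiable ℝ (Function.uncurry L))
    (hLip : ∀ θ₁ ω₁ θ₂ ω₂,
      ‖gradTheta L θ₁ ω₁ - gradTheta L θ₂ ω₂‖ ≤ l * Real.sqrt (‖θ₁ - θ₂‖ ^ 2 + ‖ω₁ - ω₂‖ ^ 2) ∧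
      ‖gradOmega L θ₁ ω₁ - gradOmega L θ₂ ω₂‖ ≤ l * Real.sqrt (‖θ₁ - θ₂‖ ^ 2 + ‖ω₁ - ω₂‖ ^ 2))
    (Lstar : EuclideanSpace ℝ (Fin d) → ℝ)
    (hLstar : ∀ θ', IsGreatest (Set.range (L θ')) (Lstar θ'))
    (hPL : ∀ θ' ω', 2 * μpl * (Lstar θ' - L θ' ω') ≤ ‖gradOmega L θ' ω'‖ ^ 2)
    (F : ℕ → MeasurableSpace Ω) (hF : ∀ t, F t ≤ mΩ)
    (θ : ℕ → Ω → EuclideanSpace ℝ (Fin d)) (ω : ℕ → Ω → EuclideanSpace ℝ (Fin n))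
    (g g' : ℕ → Ω → EuclideanSpace ℝ (Fin d))
    (hθmeas : ∀ t, Measurable[F t] (θ t)) (hωmeas : ∀ t, Measurable[F t] (ω t))
    (hgmeas : ∀ t, Measurable (g t)) (hg'meas : ∀ t, Measurable (g' t))
    (hg_mean : ∀ t, P[g t|F t] =ᵐ[P] fun x => gradTheta L (θ t x) (ω t x))
    (hg_var : ∀ t, ∀ᵐ x ∂P,
      (P[(fun y => ‖g t y - gradTheta L (θ t y) (ω t y)‖ ^ 2)|F t]) x ≤ σ ^ 2 / (M : ℝ))
    (hg'_mean : ∀ t, P[g' t|F t ⊔ MeasurableSpace.comap (g t) inferInstance] =ᵐ[P]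
      fun x => gradTheta L (θ t x + ρ • g t x) (ω t x))
    (hg'_var : ∀ t, ∀ᵐ x ∂P,
      (P[(fun y => ‖g' t y - gradTheta L (θ t y + ρ • g t y) (ω t y)‖ ^ 2)|
        F t ⊔ MeasurableSpace.comap (g t) inferInstance]) x ≤ σ ^ 2 / (M : ℝ))
    (hint_g2 : ∀ t, Integrable (fun x => ‖g t x‖ ^ 2) P)
    (hint_g'2 : ∀ t, Integrable (fun x => ‖g' t x‖ ^ 2) P)
    (hint_gradθ2 : ∀ t, Integrable (fun x => ‖gradTheta L (θ t x) (ω t x)‖ ^ 2) P)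
    (hint_inner : ∀ t,
      Integrable (fun x => (inner ℝ (g' t x) (gradTheta L (θ t x) (ω t x)) : ℝ)) P)
    :
    ∀ t, ∫ x, ‖g' t x‖ ^ 2 ∂P
      ≤ (4 * ρ ^ 2 * l ^ 2 + 2 * ρ * l + 2) * ∫ x, ‖gradTheta L (θ t x) (ω t x)‖ ^ 2 ∂P
        + (5 * ρ ^ 2 * l ^ 2 + 2) * σ ^ 2 / M := by
  intro t
  lift l to NNReal using hl.le
  have hg := (memLp_two_iff_integrable_sq_norm (hgmeas t).aestronglyMeasurable).2 (hint_g2 t)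
  have hg' := (memLp_two_iff_integrable_sq_norm (hg'meas t).aestronglyMeasurable).2 (hint_g'2 t)
  have hm := sup_le (hF t) (hgmeas t).comap_le
  have hV : ∀ x, LipschitzWith l fun z => gradTheta L z (ω t x) := fun x =>
    lipschitzWith_left_of_norm_sub_le_sqrt_s8 (fun θ₁ ω₁ θ₂ ω₂ => (hLip θ₁ ω₁ θ₂ ω₂).1) (ω t x)
  grw [sharpDRO_second_moment_bound_general hm hV ρ hg hg'
    ((hg.condExp one_le_two).ae_eq (hg_mean t)) (integral_le_of_ae_condExp_le (hF t) (hg_var t))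
    (hg'_mean t) (integral_le_of_ae_condExp_le hm (hg'_var t))]
  have slack : 0 ≤ 2 * ρ * l * ∫ x, ‖gradTheta L (θ t x) (ω t x)‖ ^ 2 ∂P +
    (ρ ^ 2 * l ^ 2 + 1) * (σ ^ 2 / M) := by positivity
  linear_combination slack
end

section
/- Squared Bayes-risk gap bounded by the uniqueness information of the out-of-modal variable (step in the Out-of-Modal proof): Let h* be pointwise Bayes optimal given (X_1, X_2, X^O) and h*_{1,2} pointwise Bayes optimal given (X_1, X_2), both assumed to exist as measurable functions. Then (L(h*_{1,2}) − L(h*))² ≤ I(X^O; Y | X_1, X_2). -/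
/-!
For a fixed value of `X^O`, the prediction of `h*` is one more admissible prediction given
`(X₁, X₂)`, so under `P_{Y | X₁, X₂}` its expected loss is at least that of `h*_{1,2}`. Hence the
risk gap is at most the mean difference between the integrals of one bounded loss against
`P_{Y | X₁, X₂}` and against `P_{Y | X₁, X₂, X^O}`. Pinsker's inequality (here: the
Donsker–Varadhan bound combined with Hoeffding's lemma) controls the square of each such difference
by the Kullback–Leibler divergence, and Jensen's inequality moves the square outside the mean.
-/

open MeasureTheory ProbabilityTheory
open scoped ENNReal

-- Kullback–Leibler divergence between two measures: `∫ log(dp/dq) dp` when `p ≪ q` and the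
-- log-likelihood ratio is integrable, and `∞` otherwise.
open Classical in
noncomputable def klDiv {α : Type*} [MeasurableSpace α] (p q : Measure α) : ℝ≥0∞ :=
  if p ≪ q ∧ Integrable (llr p q) p then ENNReal.ofReal (∫ x, llr p q x ∂p) else ⊤

/-- Conditional mutual information `I(U; Y | W)`: the expectation over `(W, U)` of the
Kullback–Leibler divergence `KL(P_{Y | W, U} ‖ P_{Y | W})` between the conditional
distributions of `Y`. -/
noncomputable def condMutualInfo {Ωs 𝒴 β γ : Type*} [MeasurableSpace Ωs] [MeasurableSpace 𝒴]
    [StandardBorelSpace 𝒴] [Nonempty 𝒴] [MeasurableSpace β] [MeasurableSpace γ]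
    (P : Measure Ωs) [IsFiniteMeasure P] (U : Ωs → β) (Y : Ωs → 𝒴) (W : Ωs → γ) : ℝ≥0∞ :=
  ∫⁻ x, klDiv (condDistrib Y (fun ω => (W ω, U ω)) P (W x, U x))
      (condDistrib Y W P (W x)) ∂P

/-- A classifier `h` is (pointwise) Bayes optimal given `W` if for almost every value `w` of
`W`, `h w` minimizes the conditional expected loss `E[ℓ(·, Y) | W = w]`. -/
def BayesOptimal {Ωs 𝒴 γ Yhat : Type*} [MeasurableSpace Ωs] [MeasurableSpace 𝒴]
    [StandardBorelSpace 𝒴] [Nonempty 𝒴] [MeasurableSpace γ]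
    (P : Measure Ωs) [IsFiniteMeasure P] (ℓ : Yhat → 𝒴 → ℝ)
    (Y : Ωs → 𝒴) (W : Ωs → γ) (h : γ → Yhat) : Prop :=
  ∀ᵐ w ∂(P.map W), ∀ yhat, ∫ y, ℓ (h w) y ∂(condDistrib Y W P w)
      ≤ ∫ y, ℓ yhat y ∂(condDistrib Y W P w)

/-- The risk `L(h) := E[ℓ(h(W), Y)]` of a classifier `h` based on the information `W`. -/
noncomputable def risk {Ωs 𝒴 γ Yhat : Type*} [MeasurableSpace Ωs]
    (P : Measure Ωs) (ℓ : Yhat → 𝒴 → ℝ) (Y : Ωs → 𝒴) (W : Ωs → γ) (h : γ → Yhat) : ℝ :=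
  ∫ x, ℓ (h (W x)) (Y x) ∂P

section Divergence

variable {α : Type*} [MeasurableSpace α] {p q : Measure α} [IsProbabilityMeasure p]

theorem integral_le_integral_llr_add_log_integral_exp [SigmaFinite q] {f : α → ℝ} (hpq : p ≪ q)
    (hllr : Integrable (llr p q) p) (hf : Integrable f p)
    (hexp : Integrable (fun x => Real.exp (f x)) q) :
    ∫ x, f x ∂p ≤ ∫ x, llr p q x ∂p + Real.log (∫ x, Real.exp (f x) ∂q) := by
  have hpq' : p ≪ q.tilted f := hpq.trans (absolutelyContinuous_tilted hexp)
  have : NeZero q := ⟨fun hq => IsProbabilityMeasure.ne_zero p <|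
    Measure.absolutelyContinuous_zero_iff.mp (hq ▸ hpq)⟩
  have := isProbabilityMeasure_tilted hexp
  have hgibbs := InformationTheory.integral_llr_add_sub_measure_univ_nonneg hpq'
    (integrable_llr_tilted_right hpq hf hllr hexp)
  rw [integral_llr_tilted_right hpq hf hexp hllr, probReal_univ, probReal_univ] at hgibbs
  linarith

theorem sq_integral_le_integral_llr_of_hasSubgaussianMGF [SigmaFinite q] {X : α → ℝ} {c : NNReal}
    (hpq : p ≪ q) (hllr : Integrable (llr p q) p) (hX : Integrable X p)
    (hsub : HasSubgaussianMGF X c q) :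
    (∫ x, X x ∂p) ^ 2 ≤ 2 * c * ∫ x, llr p q x ∂p := by
  have hquad (t : ℝ) :
      0 ≤ c / 2 * (t * t) + -(∫ x, X x ∂p) * t + ∫ x, llr p q x ∂p := by
    have hDV := integral_le_integral_llr_add_log_integral_exp hpq hllr (hX.const_mul t)
      (hsub.integrable_exp_mul t)
    have hcgf : Real.log (∫ x, Real.exp (t * X x) ∂q) ≤ c * t ^ 2 / 2 := hsub.cgf_le t
    rw [integral_const_mul] at hDV
    linarith
  have hdiscrim := discrim_le_zero hquad
  rw [discrim] at hdiscrim
  linarith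

variable [IsProbabilityMeasure q] {f : α → ℝ} {a b : ℝ}

theorem two_mul_sq_integral_sub_integral_le_integral_llr (hpq : p ≪ q)
    (hllr : Integrable (llr p q) p) (hf : Measurable f) (hfab : ∀ x, f x ∈ Set.Icc a b) :
    2 * (∫ x, f x ∂p - ∫ x, f x ∂q) ^ 2 ≤ (b - a) ^ 2 * ∫ x, llr p q x ∂p := by
  have hfp : Integrable f p := .of_mem_Icc a b hf.aemeasurable (.of_forall hfab)
  have hhoeffding := hasSubgaussianMGF_of_mem_Icc (μ := q) hf.aemeasurable (.of_forall hfab)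
  have hsq := sq_integral_le_integral_llr_of_hasSubgaussianMGF hpq hllr
    (hfp.sub (integrable_const _)) hhoeffding
  have hmean : ∫ x, (f x - ∫ y, f y ∂q) ∂p = ∫ x, f x ∂p - ∫ x, f x ∂q := by
    rw [integral_sub hfp (integrable_const _), integral_const, probReal_univ, one_smul]
  have hvar : (((‖b - a‖₊ / 2) ^ 2 : NNReal) : ℝ) = (b - a) ^ 2 / 4 := by
    push_cast
    rw [div_pow, Real.norm_eq_abs, sq_abs]
    norm_num
  rw [hvar] at hsq
  simp only [Pi.sub_apply, hmean] at hsq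
  linarith

theorem two_mul_enorm_integral_sub_integral_sq_le_klDiv (hf : Measurable f)
    (hfab : ∀ x, f x ∈ Set.Icc a b) :
    2 * ‖∫ x, f x ∂p - ∫ x, f x ∂q‖ₑ ^ 2 ≤ ‖b - a‖ₑ ^ 2 * klDiv p q := by
  have enorm_sq (x : ℝ) : ‖x‖ₑ ^ 2 = ENNReal.ofReal (x ^ 2) := by
    rw [Real.enorm_eq_ofReal_abs, ← ENNReal.ofReal_pow (abs_nonneg x), sq_abs]
  rw [klDiv]
  split_ifs with h
  · rw [enorm_sq, enorm_sq, ← ENNReal.ofReal_ofNat, ← ENNReal.ofReal_mul zero_le_two,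
      ← ENNReal.ofReal_mul (sq_nonneg _)]
    exact ENNReal.ofReal_le_ofReal
      (two_mul_sq_integral_sub_integral_le_integral_llr h.1 h.2 hf hfab)
  · obtain rfl | hab := eq_or_ne a b
    · have hconst : f = fun _ => a := funext fun x => le_antisymm (hfab x).2 (hfab x).1
      simp [hconst]
    · have hwidth : ‖b - a‖ₑ ^ 2 ≠ 0 :=
        pow_ne_zero 2 (enorm_ne_zero.mpr (sub_ne_zero.mpr hab.symm))
      rw [ENNReal.mul_top hwidth]
      exact le_top

end Divergence

theorem enorm_integral_sq_le_lintegral_enorm_sq {α E : Type*} [MeasurableSpace α]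
    [NormedAddCommGroup E] [NormedSpace ℝ E] {μ : Measure α} [IsProbabilityMeasure μ] {f : α → E}
    (hf : AEStronglyMeasurable f μ) : ‖∫ x, f x ∂μ‖ₑ ^ 2 ≤ ∫⁻ x, ‖f x‖ₑ ^ 2 ∂μ := by
  calc ‖∫ x, f x ∂μ‖ₑ ^ 2 ≤ eLpNorm f 1 μ ^ 2 := by
        rw [eLpNorm_one_eq_lintegral_enorm]
        gcongr
        exact enorm_integral_le_lintegral_enorm f
    _ ≤ eLpNorm f 2 μ ^ 2 := by
        gcongr
        exact eLpNorm_le_eLpNorm_of_exponent_le one_le_two hf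
    _ = ∫⁻ x, ‖f x‖ₑ ^ 2 ∂μ := by
        simpa using eLpNorm_nnreal_pow_eq_lintegral (f := f) (μ := μ) (p := 2) two_ne_zero

section Bayes

variable {Ωs 𝒴 Yhat γ : Type*} [MeasurableSpace Ωs] [MeasurableSpace 𝒴] [StandardBorelSpace 𝒴]
  [Nonempty 𝒴] [MeasurableSpace γ]

/-- The conditional risk `E[ℓ(g(ω), Y) | W = W(ω)]` with the prediction `g(ω)` held fixed. The
prediction may depend on all of `ω`, so it can use information that the law of `Y` ignores. -/
noncomputable def condRisk (P : Measure Ωs) [IsFiniteMeasure P] (ℓ : Yhat → 𝒴 → ℝ) (Y : Ωs → 𝒴)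
    (W : Ωs → γ) (g : Ωs → Yhat) (x : Ωs) : ℝ :=
  ∫ y, ℓ (g x) y ∂condDistrib Y W P (W x)

variable [MeasurableSpace Yhat] {P : Measure Ωs} [IsFiniteMeasure P] {ℓ : Yhat → 𝒴 → ℝ} {a b : ℝ}
  {Y : Ωs → 𝒴} {W : Ωs → γ} {h : γ → Yhat}

theorem integrable_condRisk {g : Ωs → Yhat} (hℓ : Measurable (Function.uncurry ℓ))
    (hℓab : ∀ yhat y, ℓ yhat y ∈ Set.Icc a b) (hW : Measurable W) (hg : Measurable g) :
    Integrable (condRisk P ℓ Y W g) P := by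
  have hloss : Measurable fun z : Ωs × 𝒴 => ℓ (g z.1) z.2 :=
    hℓ.comp (hg.prodMap measurable_id)
  have hint : Integrable (fun z : Ωs × 𝒴 => ℓ (g z.1) z.2)
      (P ⊗ₘ (condDistrib Y W P).comap W hW) :=
    .of_mem_Icc a b hloss.aemeasurable (.of_forall fun z => hℓab (g z.1) z.2)
  exact hint.integral_compProd

theorem risk_eq_integral_condRisk (hℓ : Measurable (Function.uncurry ℓ))
    (hℓab : ∀ yhat y, ℓ yhat y ∈ Set.Icc a b) (hY : Measurable Y) (hW : Measurable W)
    (hh : Measurable h) :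
    risk P ℓ Y W h = ∫ x, condRisk P ℓ Y W (h ∘ W) x ∂P := by
  have hloss : Measurable fun z : γ × 𝒴 => ℓ (h z.1) z.2 :=
    hℓ.comp (hh.prodMap measurable_id)
  have hint : Integrable (fun x => ℓ (h (W x)) (Y x)) P :=
    .of_mem_Icc a b (hloss.comp (hW.prodMk hY)).aemeasurable
      (.of_forall fun x => hℓab (h (W x)) (Y x))
  rw [risk, ← integral_condExp hW.comap_le]
  exact integral_congr_ae (condExp_prod_ae_eq_integral_condDistrib hW hY.aemeasurable
    hloss.stronglyMeasurable hint)

theorem BayesOptimal.risk_le_integral_condRisk {g : Ωs → Yhat} (hopt : BayesOptimal P ℓ Y W h)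
    (hℓ : Measurable (Function.uncurry ℓ)) (hℓab : ∀ yhat y, ℓ yhat y ∈ Set.Icc a b)
    (hY : Measurable Y) (hW : Measurable W) (hh : Measurable h) (hg : Measurable g) :
    risk P ℓ Y W h ≤ ∫ x, condRisk P ℓ Y W g x ∂P := by
  rw [risk_eq_integral_condRisk hℓ hℓab hY hW hh]
  refine integral_mono_ae (integrable_condRisk hℓ hℓab hW (hh.comp hW))
    (integrable_condRisk hℓ hℓab hW hg) ?_
  filter_upwards [ae_of_ae_map hW.aemeasurable hopt] with x hx
  exact hx (g x)

theorem BayesOptimal.risk_le {h' : γ → Yhat} (hopt : BayesOptimal P ℓ Y W h)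
    (hℓ : Measurable (Function.uncurry ℓ)) (hℓab : ∀ yhat y, ℓ yhat y ∈ Set.Icc a b)
    (hY : Measurable Y) (hW : Measurable W) (hh : Measurable h) (hh' : Measurable h') :
    risk P ℓ Y W h ≤ risk P ℓ Y W h' :=
  (hopt.risk_le_integral_condRisk hℓ hℓab hY hW hh (hh'.comp hW)).trans_eq
    (risk_eq_integral_condRisk hℓ hℓab hY hW hh').symm

end Bayes

-- `ENNReal.ofReal` truncates at `0`: the bound is empty when `g` has a larger risk than `h`.
theorem oom_squared_gap_le_uniqueness_info_general
    {Ωs 𝒴 Yhat β γ : Type*} [MeasurableSpace Ωs] [MeasurableSpace 𝒴] [StandardBorelSpace 𝒴]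
    [Nonempty 𝒴] [MeasurableSpace Yhat] [MeasurableSpace β] [MeasurableSpace γ]
    {P : Measure Ωs} [IsProbabilityMeasure P] {ℓ : Yhat → 𝒴 → ℝ} {a b : ℝ}
    {U : Ωs → β} {W : Ωs → γ} {Y : Ωs → 𝒴} {h : γ → Yhat} (g : γ × β → Yhat)
    (hopt : BayesOptimal P ℓ Y W h) (hℓ : Measurable (Function.uncurry ℓ))
    (hℓab : ∀ yhat y, ℓ yhat y ∈ Set.Icc a b) (hU : Measurable U) (hW : Measurable W)
    (hY : Measurable Y) (hh : Measurable h) (hg : Measurable g) :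
    2 * ENNReal.ofReal (risk P ℓ Y W h - risk P ℓ Y (fun x => (W x, U x)) g) ^ 2
      ≤ ‖b - a‖ₑ ^ 2 * condMutualInfo P U Y W := by
  set V : Ωs → γ × β := fun x => (W x, U x)
  have hV : Measurable V := hW.prodMk hU
  have hgV : Measurable (g ∘ V) := hg.comp hV
  set RW : Ωs → ℝ := condRisk P ℓ Y W (g ∘ V)
  set RV : Ωs → ℝ := condRisk P ℓ Y V (g ∘ V)
  have hRW : Integrable RW P := integrable_condRisk hℓ hℓab hW hgV
  have hRV : Integrable RV P := integrable_condRisk hℓ hℓab hV hgV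
  have hgap : risk P ℓ Y W h - risk P ℓ Y V g ≤ ∫ x, RW x - RV x ∂P := by
    rw [integral_sub hRW hRV, risk_eq_integral_condRisk hℓ hℓab hY hV hg]
    gcongr
    exact hopt.risk_le_integral_condRisk hℓ hℓab hY hW hh hgV
  have hpinsker (x : Ωs) : 2 * ‖RW x - RV x‖ₑ ^ 2
      ≤ ‖b - a‖ₑ ^ 2 * klDiv (condDistrib Y V P (V x)) (condDistrib Y W P (W x)) := by
    rw [enorm_sub_rev]
    exact two_mul_enorm_integral_sub_integral_sq_le_klDiv (hℓ.comp measurable_prodMk_left)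
      (hℓab (g (V x)))
  calc 2 * ENNReal.ofReal (risk P ℓ Y W h - risk P ℓ Y V g) ^ 2
      ≤ 2 * ‖∫ x, RW x - RV x ∂P‖ₑ ^ 2 := by
        gcongr
        exact (ENNReal.ofReal_le_ofReal hgap).trans (Real.ofReal_le_enorm _)
    _ ≤ 2 * ∫⁻ x, ‖RW x - RV x‖ₑ ^ 2 ∂P := by
        gcongr
        exact enorm_integral_sq_le_lintegral_enorm_sq (hRW.sub hRV).aestronglyMeasurable
    _ = ∫⁻ x, 2 * ‖RW x - RV x‖ₑ ^ 2 ∂P :=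
        (lintegral_const_mul' _ _ ENNReal.ofNat_ne_top).symm
    _ ≤ ∫⁻ x, ‖b - a‖ₑ ^ 2 * klDiv (condDistrib Y V P (V x)) (condDistrib Y W P (W x)) ∂P :=
        lintegral_mono hpinsker
    _ = ‖b - a‖ₑ ^ 2 * condMutualInfo P U Y W :=
        lintegral_const_mul' _ _ (ENNReal.pow_ne_top enorm_ne_top)

/-- **Squared Bayes-risk gap bounded by the uniqueness information of the out-of-modal
variable (step in the Out-of-Modal proof).** -/
theorem oom_squared_gap_le_uniqueness_info
    {Ωs 𝒴 Yhat β₁ β₂ βO : Type*} [MeasurableSpace Ωs] [MeasurableSpace 𝒴]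
    [StandardBorelSpace 𝒴] [Nonempty 𝒴] [MeasurableSpace Yhat]
    [MeasurableSpace β₁] [MeasurableSpace β₂] [MeasurableSpace βO]
    (P : Measure Ωs) [IsProbabilityMeasure P]
    (ℓ : Yhat → 𝒴 → ℝ) (hℓmeas : Measurable (Function.uncurry ℓ))
    (hℓ01 : ∀ yhat y, ℓ yhat y ∈ Set.Icc (0 : ℝ) 1)
    (X₁ : Ωs → β₁) (X₂ : Ωs → β₂) (XO : Ωs → βO) (Y : Ωs → 𝒴)
    (hX₁ : Measurable X₁) (hX₂ : Measurable X₂) (hXO : Measurable XO) (hYm : Measurable Y)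
    (hstar : β₁ × β₂ × βO → Yhat) (h12 : β₁ × β₂ → Yhat)
    (hstarm : Measurable hstar) (h12m : Measurable h12)
    (hBstar : BayesOptimal P ℓ Y (fun x => (X₁ x, X₂ x, XO x)) hstar)
    (hB12 : BayesOptimal P ℓ Y (fun x => (X₁ x, X₂ x)) h12) :
    ENNReal.ofReal ((risk P ℓ Y (fun x => (X₁ x, X₂ x)) h12
          - risk P ℓ Y (fun x => (X₁ x, X₂ x, XO x)) hstar) ^ 2)
      ≤ condMutualInfo P XO Y (fun x => (X₁ x, X₂ x)) := by
  have hle : risk P ℓ Y (fun x => (X₁ x, X₂ x, XO x)) hstar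
      ≤ risk P ℓ Y (fun x => (X₁ x, X₂ x)) h12 :=
    hBstar.risk_le (h' := fun v : β₁ × β₂ × βO => h12 (v.1, v.2.1)) hℓmeas hℓ01 hYm
      (hX₁.prodMk (hX₂.prodMk hXO)) hstarm (h12m.comp (by fun_prop))
  have hgen := oom_squared_gap_le_uniqueness_info_general (hstar ∘ MeasurableEquiv.prodAssoc)
    hB12 hℓmeas hℓ01 hXO (hX₁.prodMk hX₂) hYm h12m
    (hstarm.comp MeasurableEquiv.prodAssoc.measurable)
  rw [sub_zero, enorm_one, one_pow, one_mul] at hgen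
  rw [ENNReal.ofReal_pow (sub_nonneg.mpr hle)]
  exact (le_mul_of_one_le_left' one_le_two).trans hgen
end
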